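/- arXiv:2310.18882 — 8 statements merged into one kernel-verified Lean document; each statement's English description precedes it below -/
import Mathlib

section
/- Let n, K, s be positive integers with K·s ≥ n, with n dividing K·s, and with s ≤ n. Then every real n×n matrix W with rank(W) ≤ K·s/n belongs to GBLR(n,K,s). -/
open Matrix BigOperators

/-- The boxcar mask of length `n`, width `w`, location `l`:
`m_{(w,l)}[j] = 1` if `(j - l) mod n < w`, else `0`. -/
noncomputable def boxcar (n w l : ℕ) : Fin n → ℝ :=
  fun j => if ((j : ℤ) - (l : ℤ)) % (n : ℤ) < (w : ℤ) then 1 else 0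

/-- `W ∈ GBLR(n,K,s)`: `W` is a sum of `K` masked rank-one blocks whose
widths sum to at most `2Ks`. -/
noncomputable def InGBLR (n K s : ℕ) (W : Matrix (Fin n) (Fin n) ℝ) : Prop :=
  ∃ (wR wC lR lC : Fin K → ℕ) (u v : Fin K → Fin n → ℝ),
    (∀ k, wR k ≤ n) ∧ (∀ k, wC k ≤ n) ∧ (∀ k, lR k < n) ∧ (∀ k, lC k < n) ∧
    W = ∑ k, Matrix.vecMulVec (fun i => boxcar n (wR k) (lR k) i * u k i)
          (fun j => boxcar n (wC k) (lC k) j * v k j) ∧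
    ∑ k, (wR k + wC k) ≤ 2 * K * s

/-- Any rank-`Ks/n` matrix is `(n,K,s)`-GBLR. -/
theorem lowRank_mem_GBLR (n K s : ℕ) (hn : 0 < n) (hK : 0 < K) (hs : 0 < s)
    (hge : n ≤ K * s) (hdvd : n ∣ K * s) (hsn : s ≤ n)
    (W : Matrix (Fin n) (Fin n) ℝ) (hrank : W.rank ≤ K * s / n) :
    InGBLR n K s W := by
  have hmul : W.rank * n ≤ K * s := (Nat.le_div_iff_mul_le hn).1 hrank
  have hrK : W.rank ≤ K := by
    have h1 : W.rank * n ≤ K * n := hmul.trans (Nat.mul_le_mul_left K hsn)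
    exact Nat.le_of_mul_le_mul_right h1 hn
  obtain ⟨r, hr⟩ : ∃ r, r = W.rank := ⟨_, rfl⟩
  rw [← hr] at hmul hrK
  have hfin : Module.finrank ℝ (LinearMap.range W.mulVecLin) = r := hr.symm
  let b := Module.finBasisOfFinrankEq ℝ (LinearMap.range W.mulVecLin) hfin
  let c : Fin n → LinearMap.range W.mulVecLin :=
    fun j => ⟨W.mulVecLin (Pi.single j 1), LinearMap.mem_range_self _ _⟩
  have hW : ∀ i j, W i j = ∑ k, (b k : Fin n → ℝ) i * b.repr (c j) k := by
    intro i j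
    have h1 := congrArg (fun x : LinearMap.range W.mulVecLin => (x : Fin n → ℝ) i)
      (b.sum_repr (c j))
    simp only [Submodule.coe_sum, Submodule.coe_smul, Finset.sum_apply, Pi.smul_apply,
      smul_eq_mul] at h1
    have h2 : (c j : Fin n → ℝ) i = W i j := by simp [c]
    rw [← h2, ← h1]
    exact Finset.sum_congr rfl fun k _ => mul_comm _ _
  obtain ⟨m, rfl⟩ := Nat.exists_eq_add_of_le hrK
  have hbox : ∀ i : Fin n, boxcar n n 0 i = 1 := by
    intro i
    unfold boxcar
    rw [if_pos]
    exact Int.emod_lt_of_pos _ (by exact_mod_cast hn)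
  refine ⟨Fin.addCases (fun _ => n) (fun _ => 0), Fin.addCases (fun _ => n) (fun _ => 0),
    fun _ => 0, fun _ => 0,
    Fin.addCases (fun k => (b k : Fin n → ℝ)) (fun _ => 0),
    Fin.addCases (fun k j => b.repr (c j) k) (fun _ => 0), ?_, ?_, fun _ => hn, fun _ => hn,
    ?_, ?_⟩
  · intro k
    refine Fin.addCases (fun i => ?_) (fun i => ?_) k <;> simp
  · intro k
    refine Fin.addCases (fun i => ?_) (fun i => ?_) k <;> simp
  · ext i j
    rw [hW i j, Matrix.sum_apply, Fin.sum_univ_add]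
    simp [Matrix.vecMulVec_apply, hbox]
  · rw [Fin.sum_univ_add]
    simp
    nlinarith
end

section
/- Let n, K, s be positive integers with s dividing K and s ≤ n. Then every (n, K/s, s)-block-sparse real matrix belongs to GBLR(n,K,s). -/
open Matrix BigOperators

/-- `j` belongs to the cyclic window of width `w` starting at `l` (mod `n`). -/
def inWindow (n w l : ℕ) (j : Fin n) : Prop :=
  ((j : ℤ) - (l : ℤ)) % (n : ℤ) < (w : ℤ)

/-- `W` is `(n,m,s)`-block-sparse: all nonzero entries of `W` lie in `m`
pairwise non-overlapping blocks (cyclic-consecutive row and column index sets),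
each of dimension at most `s × s`. -/
def IsBlockSparse (n m s : ℕ) (W : Matrix (Fin n) (Fin n) ℝ) : Prop :=
  ∃ (rW cW rL cL : Fin m → ℕ),
    (∀ t, rW t ≤ s) ∧ (∀ t, cW t ≤ s) ∧ (∀ t, rL t < n) ∧ (∀ t, cL t < n) ∧
    (∀ i j, W i j ≠ 0 →
      ∃ t, inWindow n (rW t) (rL t) i ∧ inWindow n (cW t) (cL t) j) ∧
    (∀ t t', t ≠ t' →
      ¬ ∃ i j, (inWindow n (rW t) (rL t) i ∧ inWindow n (cW t) (cL t) j) ∧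
        (inWindow n (rW t') (rL t') i ∧ inWindow n (cW t') (cL t') j))

/-- The inner sum over the rows of one block. -/
theorem gblr_block_sum (n s w l : ℕ) (hn : 0 < n) (hw : w ≤ s)
    (W : Matrix (Fin n) (Fin n) ℝ) (i j : Fin n) :
    ∑ a : Fin s, (boxcar n w l i * (if ((i : ℤ) - (l : ℤ)) % (n : ℤ) = (a : ℕ) then 1 else 0)) *
      W ⟨(l + a) % n, Nat.mod_lt _ hn⟩ j = boxcar n w l i * W i j := by
  have hn' : (0 : ℤ) < n := by exact_mod_cast hn
  by_cases h : ((i : ℤ) - (l : ℤ)) % (n : ℤ) < (w : ℤ)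
  · have h0 : 0 ≤ ((i : ℤ) - (l : ℤ)) % (n : ℤ) := Int.emod_nonneg _ hn'.ne'
    obtain ⟨b, hb⟩ := Int.eq_ofNat_of_zero_le h0
    have hbs : b < s := by omega
    rw [Finset.sum_eq_single (⟨b, hbs⟩ : Fin s)]
    · have hi : (⟨(l + b) % n, Nat.mod_lt _ hn⟩ : Fin n) = i := by
        apply Fin.ext
        have : (((l + b) % n : ℕ) : ℤ) = (i : ℕ) := by
          push_cast
          rw [← hb, Int.add_emod_emod, add_sub_cancel]
          exact Int.emod_eq_of_lt (by positivity) (by exact_mod_cast i.isLt)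
        exact_mod_cast this
      simp only [hi, hb, if_true, mul_one]
    · intro a _ ha
      have : ¬ (((i : ℤ) - (l : ℤ)) % (n : ℤ) = (a : ℕ)) := by
        intro h2
        apply ha
        apply Fin.ext
        simp only
        omega
      simp [this]
    · simp
  · simp [boxcar, h]

theorem gblr_aux (n m s : ℕ) (hn : 0 < n) (hsn : s ≤ n) (W : Matrix (Fin n) (Fin n) ℝ)
    (hbs : IsBlockSparse n m s W) : InGBLR n (m * s) s W := by
  obtain ⟨rW, cW, rL, cL, hrW, hcW, hrL, hcL, hcov, hdis⟩ := hbs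
  let e : Fin (m * s) ≃ Fin m × Fin s := finProdFinEquiv.symm
  refine ⟨fun k => rW (e k).1, fun k => cW (e k).1, fun k => rL (e k).1, fun k => cL (e k).1,
    fun k i => if ((i : ℤ) - (rL (e k).1 : ℤ)) % (n : ℤ) = ((e k).2 : ℕ) then 1 else 0,
    fun k j => W ⟨(rL (e k).1 + (e k).2) % n, Nat.mod_lt _ hn⟩ j,
    fun k => (hrW _).trans hsn, fun k => (hcW _).trans hsn, fun k => hrL _, fun k => hcL _,
    ?_, ?_⟩
  · ext i j
    rw [Matrix.sum_apply]
    simp only [Matrix.vecMulVec_apply]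
    rw [e.sum_comp (fun p : Fin m × Fin s =>
      (boxcar n (rW p.1) (rL p.1) i *
        (if ((i : ℤ) - (rL p.1 : ℤ)) % (n : ℤ) = (p.2 : ℕ) then 1 else 0)) *
      (boxcar n (cW p.1) (cL p.1) j * W ⟨(rL p.1 + p.2) % n, Nat.mod_lt _ hn⟩ j)),
      Fintype.sum_prod_type]
    have key : ∀ t : Fin m, ∑ a : Fin s, (boxcar n (rW t) (rL t) i *
        (if ((i : ℤ) - (rL t : ℤ)) % (n : ℤ) = (a : ℕ) then 1 else 0)) *
      (boxcar n (cW t) (cL t) j * W ⟨(rL t + a) % n, Nat.mod_lt _ hn⟩ j) =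
        boxcar n (cW t) (cL t) j * (boxcar n (rW t) (rL t) i * W i j) := by
      intro t
      rw [← gblr_block_sum n s (rW t) (rL t) hn (hrW t) W i j, Finset.mul_sum]
      exact Finset.sum_congr rfl fun a _ => by ring
    simp only [key]
    by_cases hW : W i j = 0
    · simp [hW]
    · obtain ⟨t, h1, h2⟩ := hcov i j hW
      rw [Finset.sum_eq_single t]
      · unfold inWindow at h1 h2
        simp [boxcar, h1, h2]
      · intro t' _ ht
        have := hdis t t' (Ne.symm ht)
        by_cases h3 : inWindow n (rW t') (rL t') i
        · by_cases h4 : inWindow n (cW t') (cL t') j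
          · exact absurd ⟨i, j, ⟨h1, h2⟩, h3, h4⟩ this
          · unfold inWindow at h4
            simp [boxcar, h4]
        · unfold inWindow at h3
          simp [boxcar, h3]
      · simp
  · calc _ ≤ ∑ _k : Fin (m * s), 2 * s :=
          Finset.sum_le_sum fun k _ => by
            have := hrW (e k).1
            have := hcW (e k).1
            dsimp only; omega
      _ = 2 * (m * s) * s := by simp; ring
      _ ≤ _ := le_rfl

/-- Any `(n, K/s, s)`-block-sparse matrix is `(n,K,s)`-GBLR. -/
theorem blockSparse_mem_GBLR (n K s : ℕ) (hn : 0 < n) (hK : 0 < K) (hs : 0 < s)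
    (hdvd : s ∣ K) (hsn : s ≤ n) (W : Matrix (Fin n) (Fin n) ℝ)
    (hbs : IsBlockSparse n (K / s) s W) : InGBLR n K s W := by
  obtain ⟨m, rfl⟩ := hdvd
  rw [Nat.mul_div_cancel_left m hs] at hbs
  rw [Nat.mul_comm s m]
  exact gblr_aux n m s hn hsn W hbs
end

section
/- Let n, s, p be positive integers with n = p·s and let K = p² (so K = (n/s)²). Then every (n, K, s, 1)-block-low-rank real matrix belongs to GBLR(n,K,s). -/
open Matrix BigOperators

/-- The `(i,j)`-th `s × s` block of an `(p·s) × (p·s)` matrix `W`, i.e. the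
submatrix `W[i·s:(i+1)·s, j·s:(j+1)·s]`. -/
def blockOf (p s : ℕ) (W : Matrix (Fin (p * s)) (Fin (p * s)) ℝ) (i j : Fin p) :
    Matrix (Fin s) (Fin s) ℝ :=
  fun a b =>
    W ⟨i.val * s + a.val, by
        calc i.val * s + a.val < i.val * s + s := by omega
          _ = (i.val + 1) * s := by ring
          _ ≤ p * s := Nat.mul_le_mul_right s i.isLt⟩
      ⟨j.val * s + b.val, by
        calc j.val * s + b.val < j.val * s + s := by omega
          _ = (j.val + 1) * s := by ring
          _ ≤ p * s := Nat.mul_le_mul_right s j.isLt⟩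

/-- `W` is `(n, p², s, r)`-block-low-rank (`n = p·s`): every `s × s` block in
the equal partition of `W` has rank at most `r`. -/
noncomputable def IsBLR (p s r : ℕ) (W : Matrix (Fin (p * s)) (Fin (p * s)) ℝ) : Prop :=
  ∀ i j : Fin p, (blockOf p s W i j).rank ≤ r

lemma boxcar_block (p s i : ℕ) (hs : 0 < s) (hi : i < p) (x : Fin (p * s)) :
    boxcar (p * s) s (i * s) x = if x.val / s = i then 1 else 0 := by
  unfold boxcar
  have hq : x.val / s < p := Nat.div_lt_of_lt_mul (x.isLt.trans_eq (mul_comm p s))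
  have hr : x.val % s < s := Nat.mod_lt _ hs
  have hx : (x.val : ℤ) = ((x.val / s : ℕ) : ℤ) * s + ((x.val % s : ℕ) : ℤ) := by
    have := Nat.div_add_mod' x.val s
    exact_mod_cast this.symm
  generalize x.val / s = q at *
  generalize x.val % s = r at *
  rw [hx]
  have key : ((q : ℤ) * s + r - ((i * s : ℕ) : ℤ)) % ((p * s : ℕ) : ℤ) < (s : ℤ) ↔ q = i := by
    push_cast
    zify at hq hr hi hs
    have hr0 : (0 : ℤ) ≤ r := Int.natCast_nonneg r
    have hq0 : (0 : ℤ) ≤ q := Int.natCast_nonneg q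
    have hi0 : (0 : ℤ) ≤ i := Int.natCast_nonneg i
    rcases lt_trichotomy q i with h | h | h
    · have e : ((q : ℤ) * s + r - i * s) % (p * s) = (q - i + p) * s + r := by
        rw [← Int.add_emod_right, Int.emod_eq_of_lt]
        · ring
        · nlinarith
        · zify at h
          nlinarith
      rw [e]
      refine iff_of_false ?_ (by omega)
      zify at h
      nlinarith
    · subst h
      refine iff_of_true ?_ rfl
      rw [show (q : ℤ) * s + r - q * s = r by ring, Int.emod_eq_of_lt hr0 (by nlinarith)]
      exact hr
    · have e : ((q : ℤ) * s + r - i * s) % (p * s) = (q - i) * s + r := by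
        zify at h
        rw [Int.emod_eq_of_lt]
        · ring
        · nlinarith
        · nlinarith
      rw [e]
      refine iff_of_false ?_ (by omega)
      zify at h
      nlinarith
  simp only [key]

lemma exists_rank_one (s : ℕ) (A : Matrix (Fin s) (Fin s) ℝ) (h : A.rank ≤ 1) :
    ∃ u v : Fin s → ℝ, ∀ a b, A a b = u a * v b := by
  rw [Matrix.rank_eq_finrank_span_cols, finrank_le_one_iff] at h
  obtain ⟨u, hu⟩ := h
  choose c hc using fun b => hu ⟨A.col b, Submodule.subset_span ⟨b, rfl⟩⟩
  refine ⟨u.1, c, fun a b => ?_⟩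
  have := congrFun (congrArg Subtype.val (hc b)) a
  simp at this
  rw [← this, mul_comm]

/-- Any `(n, K, s, 1)`-block-low-rank matrix with `n = p·s`, `K = p²` is
`(n,K,s)`-GBLR. -/
theorem blockLowRank_mem_GBLR (p s : ℕ) (hp : 0 < p) (hs : 0 < s)
    (W : Matrix (Fin (p * s)) (Fin (p * s)) ℝ) (hblr : IsBLR p s 1 W) :
    InGBLR (p * s) (p ^ 2) s W := by
  choose U V hUV using fun i j => exists_rank_one s _ (hblr i j)
  let e : Fin (p ^ 2) ≃ Fin p × Fin p := (finCongr (pow_two p)).trans finProdFinEquiv.symm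
  have hlt : ∀ i : Fin p, i.val * s < p * s := fun i => Nat.mul_lt_mul_of_pos_right i.isLt hs
  refine ⟨fun _ => s, fun _ => s, fun k => (e k).1.val * s, fun k => (e k).2.val * s,
    fun k x => U (e k).1 (e k).2 ⟨x.val % s, Nat.mod_lt _ hs⟩,
    fun k x => V (e k).1 (e k).2 ⟨x.val % s, Nat.mod_lt _ hs⟩,
    fun _ => Nat.le_mul_of_pos_left s hp, fun _ => Nat.le_mul_of_pos_left s hp,
    fun k => hlt _, fun k => hlt _, ?_, ?_⟩
  · ext x y
    have hx : x.val / s < p := Nat.div_lt_of_lt_mul (x.isLt.trans_eq (mul_comm p s))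
    have hy : y.val / s < p := Nat.div_lt_of_lt_mul (y.isLt.trans_eq (mul_comm p s))
    rw [Matrix.sum_apply, Finset.sum_eq_single (e.symm (⟨x.val / s, hx⟩, ⟨y.val / s, hy⟩))]
    · simp only [Matrix.vecMulVec_apply, Equiv.apply_symm_apply, boxcar_block p s _ hs hx,
        boxcar_block p s _ hs hy, if_true, one_mul]
      rw [← hUV]
      unfold blockOf
      congr 1 <;> ext <;> simp [Nat.div_add_mod']
    · intro k _ hk
      simp only [Matrix.vecMulVec_apply, boxcar_block p s _ hs (e k).1.isLt,
        boxcar_block p s _ hs (e k).2.isLt]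
      by_cases h1 : x.val / s = (e k).1.val
      · by_cases h2 : y.val / s = (e k).2.val
        · exact absurd (by rw [Equiv.eq_symm_apply]; ext <;> simp [h1, h2]) hk
        · simp [h2]
      · simp [h1]
    · simp
  · simp only [Finset.sum_const, Finset.card_univ, Fintype.card_fin, smul_eq_mul]
    apply le_of_eq; ring
end

section
/- Let n be a positive integer, w ∈ {0,1,...,n} and l ∈ {0,1,...,n−1}. Then the Gaudi mask converges to the boxcar mask as σ → ∞: for every j ∈ {0,...,n−1}, m̃_{(w,l)}^σ[j] tends to m_{(w,l)}[j] as σ tends to +∞ (equivalently, ‖m_{(w,l)} − m̃_{(w,l)}^σ‖₂ → 0 along σ → ∞). -/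
open BigOperators

/-- The normalized sinc function: `sinc x = sin(πx)/(πx)` for `x ≠ 0`, `sinc 0 = 1`. -/
noncomputable def sinc (x : ℝ) : ℝ :=
  if x = 0 then 1 else Real.sin (Real.pi * x) / (Real.pi * x)

/-- The Dirichlet kernel `d_w[k] = w · sinc(wk/n)/sinc(k/n) · e^{iπk(1−w)/n}`. -/
noncomputable def dKer (n w k : ℕ) : ℂ :=
  (w : ℂ) * ((sinc ((w : ℝ) * k / n) / sinc ((k : ℝ) / n) : ℝ) : ℂ)
    * Complex.exp (Complex.I * (Real.pi : ℂ) * (k : ℂ) * (1 - (w : ℂ)) / (n : ℂ))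

/-- The Gaudi (Gaussian-Dirichlet) function `d_w^σ[k] = e^{−k²/(2σ²)} · d_w[k]`. -/
noncomputable def gaudiKer (n w : ℕ) (σ : ℝ) (k : ℕ) : ℂ :=
  (Real.exp (-(k : ℝ) ^ 2 / (2 * σ ^ 2)) : ℝ) * dKer n w k

/-- The Gaudi mask: the inverse discrete Fourier transform of the Gaudi
function modulated by the location `l`:
`m̃_{(w,l)}^σ[j] = (1/n)·∑_{k=0}^{n−1} e^{2πi·jk/n} e^{−2πi·kl/n} d_w^σ[k]`. -/
noncomputable def gaudiMask (n w l : ℕ) (σ : ℝ) : Fin n → ℂ :=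
  fun j => (1 / n : ℂ) * ∑ k ∈ Finset.range n,
    Complex.exp (2 * (Real.pi : ℂ) * Complex.I * (j : ℂ) * (k : ℂ) / (n : ℂ))
      * Complex.exp (-2 * (Real.pi : ℂ) * Complex.I * (k : ℂ) * (l : ℂ) / (n : ℂ))
      * gaudiKer n w σ k

theorem dKer_eq (n : ℕ) (hn : 0 < n) (w k : ℕ) (hk : k < n) :
    dKer n w k = ∑ m ∈ Finset.range w,
      Complex.exp (-(2 * (Real.pi : ℂ) * Complex.I * (k : ℂ) * (m : ℂ) / (n : ℂ))) := by
  have hnR : (n : ℝ) ≠ 0 := by positivity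
  have hnC : (n : ℂ) ≠ 0 := by exact_mod_cast hn.ne'
  unfold dKer
  rcases Nat.eq_zero_or_pos k with rfl | hk0
  · simp [sinc]
  rcases Nat.eq_zero_or_pos w with rfl | hw0
  · simp
  have hkR : (k : ℝ) ≠ 0 := by positivity
  have hwR : (w : ℝ) ≠ 0 := by positivity
  obtain ⟨θ, hθ⟩ : ∃ θ : ℝ, θ = Real.pi * k / n := ⟨_, rfl⟩
  have hsin : Real.sin θ ≠ 0 := by
    apply ne_of_gt
    apply Real.sin_pos_of_pos_of_lt_pi
    · rw [hθ]; positivity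
    · rw [hθ, div_lt_iff₀ (by positivity)]
      have : (k : ℝ) < n := by exact_mod_cast hk
      exact mul_lt_mul_of_pos_left this Real.pi_pos
  have hs : (w : ℝ) * (sinc ((w : ℝ) * k / n) / sinc ((k : ℝ) / n))
      = Real.sin (w * θ) / Real.sin θ := by
    have h1 : (w : ℝ) * k / n ≠ 0 := by positivity
    have h2 : (k : ℝ) / n ≠ 0 := by positivity
    have e1 : Real.pi * ((w : ℝ) * k / n) = w * θ := by rw [hθ]; ring
    have e2 : Real.pi * ((k : ℝ) / n) = θ := by rw [hθ]; ring
    have hθ0 : θ ≠ 0 := by rw [hθ]; positivity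
    rw [sinc, sinc, if_neg h1, if_neg h2, e1, e2]
    field_simp
  have hsC : (w : ℂ) * ((sinc ((w : ℝ) * k / n) / sinc ((k : ℝ) / n) : ℝ) : ℂ)
      = Complex.sin (w * θ) / Complex.sin θ := by
    rw [← Complex.ofReal_natCast, ← Complex.ofReal_mul, hs]
    push_cast
    rfl
  have hsinC : Complex.sin θ ≠ 0 := by
    rw [← Complex.ofReal_sin]; exact_mod_cast hsin
  have hθC : (θ : ℂ) = Real.pi * k / n := by rw [hθ]; push_cast; rfl
  obtain ⟨a, ha⟩ : ∃ a, a = Complex.exp (θ * Complex.I) := ⟨_, rfl⟩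
  obtain ⟨b, hb⟩ : ∃ b, b = Complex.exp (-θ * Complex.I) := ⟨_, rfl⟩
  have hab : a * b = 1 := by
    rw [ha, hb, ← Complex.exp_add]; simp
  have haw : Complex.exp (w * θ * Complex.I) = a ^ w := by
    rw [ha, ← Complex.exp_nat_mul]; congr 1; ring
  have hbw : Complex.exp (-(w * θ) * Complex.I) = b ^ w := by
    rw [hb, ← Complex.exp_nat_mul]; congr 1; ring
  have hm : ∀ m : ℕ, Complex.exp (-(2 * (Real.pi : ℂ) * Complex.I * (k : ℂ) * (m : ℂ) / (n : ℂ)))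
      = (b ^ 2) ^ m := by
    intro m
    rw [hb, ← Complex.exp_nat_mul, ← Complex.exp_nat_mul, hθC]; congr 1; push_cast; ring
  have he : Complex.exp (Complex.I * (Real.pi : ℂ) * (k : ℂ) * (1 - (w : ℂ)) / (n : ℂ))
      = a * b ^ w := by
    rw [← hbw, ha, ← Complex.exp_add, hθC]; congr 1; ring
  have hg := mul_geom_sum (b ^ 2) w
  have habw : a ^ w * b ^ w = 1 := by rw [← mul_pow, hab, one_pow]
  rw [hsC, he, Finset.sum_congr rfl (fun m _ => hm m), div_mul_eq_mul_div, div_eq_iff hsinC,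
    Complex.sin, Complex.sin, haw, hbw, ← ha, ← hb]
  have hp : (b ^ 2) ^ w = b ^ w * b ^ w := by rw [← pow_mul, two_mul, pow_add]
  rw [hp] at hg
  generalize (∑ i ∈ Finset.range w, (b ^ 2) ^ i) = S at *
  linear_combination (-(Complex.I / 2) * a) * habw + (-(Complex.I / 2) * a) * hg
    + (Complex.I / 2) * b * S * hab

theorem orth (n : ℕ) (hn : 0 < n) (d : ℤ) :
    ∑ k ∈ Finset.range n, Complex.exp (2 * (Real.pi : ℂ) * Complex.I * (k : ℂ) * (d : ℂ) / (n : ℂ))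
      = if (n : ℤ) ∣ d then (n : ℂ) else 0 := by
  have hz := Complex.isPrimitiveRoot_exp n hn.ne'
  set ζ := Complex.exp (2 * Real.pi * Complex.I / n) with hζ
  have h : ∀ k : ℕ, Complex.exp (2 * (Real.pi : ℂ) * Complex.I * (k : ℂ) * (d : ℂ) / (n : ℂ))
      = (ζ ^ d) ^ k := by
    intro k
    rw [hζ, ← Complex.exp_int_mul, ← Complex.exp_nat_mul]; congr 1; ring
  rw [Finset.sum_congr rfl (fun k _ => h k)]
  have hiff := hz.zpow_eq_one_iff_dvd d
  split_ifs with hd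
  · rw [hiff.2 hd]; simp
  · have h1 : ζ ^ d - 1 ≠ 0 := sub_ne_zero.2 (fun h => hd (hiff.1 h))
    have h2 := mul_geom_sum (ζ ^ d) n
    have h3 : (ζ ^ d) ^ n = 1 := by
      rw [← zpow_natCast, ← zpow_mul, mul_comm, zpow_mul, zpow_natCast, hz.pow_eq_one, one_zpow]
    rw [h3, sub_self] at h2
    exact (mul_eq_zero.1 h2).resolve_left h1

theorem count (n : ℕ) (hn : 0 < n) (w : ℕ) (hw : w ≤ n) (d : ℤ) :
    ∑ m ∈ Finset.range w, (if (n : ℤ) ∣ d - m then (n : ℂ) else 0)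
      = if d % (n : ℤ) < w then (n : ℂ) else 0 := by
  have hn' : (n : ℤ) ≠ 0 := by exact_mod_cast hn.ne'
  have h0 := Int.emod_nonneg d hn'
  have hlt := Int.emod_lt_of_pos d (b := (n : ℤ)) (by exact_mod_cast hn)
  have key : ∀ m ∈ Finset.range w, ((n : ℤ) ∣ d - m ↔ (d % (n : ℤ)).toNat = m) := by
    intro m hm
    have hm := Finset.mem_range.1 hm
    have hmm : (m : ℤ) % n = m := Int.emod_eq_of_lt (by positivity) (by omega)
    rw [← Int.emod_emod_of_dvd d (dvd_refl (n : ℤ))] at *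
    constructor
    · intro h
      have := (Int.emod_emod_of_dvd d (dvd_refl (n : ℤ)))
      have h2 := Int.emod_eq_emod_iff_emod_sub_eq_zero.2 (Int.emod_eq_zero_of_dvd h)
      rw [hmm] at h2
      omega
    · intro h
      apply Int.dvd_of_emod_eq_zero
      apply Int.emod_eq_emod_iff_emod_sub_eq_zero.1
      rw [hmm]
      have := (Int.emod_emod_of_dvd d (dvd_refl (n : ℤ)))
      omega
  rw [Finset.sum_congr rfl (fun m hm => if_congr (key m hm) rfl rfl), Finset.sum_ite_eq]
  apply if_congr _ rfl rfl
  rw [Finset.mem_range]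
  omega

/-- The Gaudi mask converges entrywise to the boxcar mask as `σ → ∞`. -/
theorem gaudiMask_tendsto_boxcar (n : ℕ) (hn : 0 < n) (w l : ℕ)
    (hw : w ≤ n) (hl : l < n) (j : Fin n) :
    Filter.Tendsto (fun σ : ℝ => gaudiMask n w l σ j) Filter.atTop
      (nhds ((boxcar n w l j : ℝ) : ℂ)) := by
  have hnC : (n : ℂ) ≠ 0 := by exact_mod_cast hn.ne'
  have hexp : ∀ k : ℕ, Filter.Tendsto
      (fun σ : ℝ => ((Real.exp (-(k : ℝ) ^ 2 / (2 * σ ^ 2)) : ℝ) : ℂ)) Filter.atTop (nhds 1) := by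
    intro k
    rw [← Complex.ofReal_one, ← Real.exp_zero]
    refine (Complex.continuous_ofReal.tendsto _).comp ((Real.continuous_exp.tendsto _).comp ?_)
    apply Filter.Tendsto.div_atTop tendsto_const_nhds
    exact (Filter.tendsto_pow_atTop two_ne_zero).const_mul_atTop two_pos
  have hval : ((boxcar n w l j : ℝ) : ℂ) = (1 / n : ℂ) * ∑ k ∈ Finset.range n,
    Complex.exp (2 * (Real.pi : ℂ) * Complex.I * (j : ℂ) * (k : ℂ) / (n : ℂ))
      * Complex.exp (-2 * (Real.pi : ℂ) * Complex.I * (k : ℂ) * (l : ℂ) / (n : ℂ))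
      * (1 * dKer n w k) := by
    have hc := count n hn w hw ((j : ℤ) - l)
    rw [Finset.sum_congr rfl (fun (m : ℕ) _ => (orth n hn ((j : ℤ) - l - (m : ℤ))).symm),
      Finset.sum_comm] at hc
    have : ∀ k ∈ Finset.range n,
      Complex.exp (2 * (Real.pi : ℂ) * Complex.I * (j : ℂ) * (k : ℂ) / (n : ℂ))
      * Complex.exp (-2 * (Real.pi : ℂ) * Complex.I * (k : ℂ) * (l : ℂ) / (n : ℂ))
      * (1 * dKer n w k) = ∑ m ∈ Finset.range w, Complex.exp (2 * (Real.pi : ℂ) * Complex.I *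
        (k : ℂ) * (((j : ℤ) - l - m : ℤ) : ℂ) / (n : ℂ)) := by
      intro k hk
      rw [dKer_eq n hn w k (Finset.mem_range.1 hk), one_mul, Finset.mul_sum]
      refine Finset.sum_congr rfl fun m _ => ?_
      rw [← Complex.exp_add, ← Complex.exp_add]
      congr 1
      push_cast
      ring
    rw [Finset.sum_congr rfl this, hc, boxcar]
    split_ifs <;> simp [hnC]
  rw [hval]
  unfold gaudiMask gaudiKer
  refine Filter.Tendsto.const_mul _ (tendsto_finsetSum _ fun k _ => ?_)
  exact Filter.Tendsto.const_mul _ ((hexp k).mul_const _)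
end

section
/- Let n be a positive integer, k ∈ {0,1,...,n−1} and σ > 0. Regard the Gaudi function entry d_w^σ[k] = e^{−k²/(2σ²)} · w · sinc(wk/n)/sinc(k/n) · e^{iπk(1−w)/n} as a complex-valued function of the real variable w. Then at every w ∈ ℝ this function has derivative with respect to w equal to e^{−2πi·kw/n} · e^{iπk/n} · e^{−k²/(2σ²)} / sinc(k/n). -/
open BigOperators

/-- The Gaudi (Gaussian-Dirichlet) function with real-valued width `w`:
`d_w^σ[k] = e^{−k²/(2σ²)} · w · sinc(wk/n)/sinc(k/n) · e^{iπk(1−w)/n}`. -/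
noncomputable def dKerR (n : ℕ) (σ : ℝ) (w : ℝ) (k : ℕ) : ℂ :=
  (Real.exp (-(k : ℝ) ^ 2 / (2 * σ ^ 2)) : ℝ)
    * ((w * sinc (w * k / n) / sinc ((k : ℝ) / n) : ℝ) : ℂ)
    * Complex.exp (Complex.I * (Real.pi : ℂ) * (k : ℂ) * (1 - (w : ℂ)) / (n : ℂ))


/-- Derivative of the Gaudi function entry with respect to the (real) width:
`∂/∂w d_w^σ[k] = e^{−2πi·kw/n} · e^{iπk/n} · e^{−k²/(2σ²)} / sinc(k/n)`. -/
theorem hasDerivAt_dKerR (n : ℕ) (hn : 0 < n) (k : ℕ) (hk : k < n)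
    (σ : ℝ) (hσ : 0 < σ) (w : ℝ) :
    HasDerivAt (fun t : ℝ => dKerR n σ t k)
      (Complex.exp (-2 * (Real.pi : ℂ) * Complex.I * (k : ℂ) * (w : ℂ) / (n : ℂ))
        * Complex.exp (Complex.I * (Real.pi : ℂ) * (k : ℂ) / (n : ℂ))
        * ((Real.exp (-(k : ℝ) ^ 2 / (2 * σ ^ 2)) : ℝ) : ℂ)
        / ((sinc ((k : ℝ) / n) : ℝ) : ℂ)) w := by
  have hn' : (n : ℂ) ≠ 0 := by exact_mod_cast hn.ne'
  rcases Nat.eq_zero_or_pos k with rfl | hkpos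
  · have : (fun t : ℝ => dKerR n σ t 0) = fun t : ℝ => (t : ℂ) := by
      funext t
      simp [dKerR, sinc]
    rw [this]
    simpa [sinc] using (hasDerivAt_id w).ofReal_comp
  · have hk' : (k : ℂ) ≠ 0 := by exact_mod_cast hkpos.ne'
    have hkR : (k : ℝ) ≠ 0 := by exact_mod_cast hkpos.ne'
    have hnR : (n : ℝ) ≠ 0 := by exact_mod_cast hn.ne'
    have hpi : (Real.pi : ℂ) ≠ 0 := by exact_mod_cast Real.pi_ne_zero
    set a : ℂ := Real.pi * k / n with ha
    have ha0 : a ≠ 0 := div_ne_zero (mul_ne_zero hpi hk') hn'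
    set C : ℂ := ((Real.exp (-(k : ℝ) ^ 2 / (2 * σ ^ 2)) : ℝ) : ℂ) with hC
    set s : ℝ := sinc ((k : ℝ) / n) with hs
    have key : ∀ t : ℝ, t * sinc (t * k / n) = Real.sin (Real.pi * k / n * t) / (Real.pi * k / n) := by
      intro t
      by_cases ht : t = 0
      · simp [ht]
      · have : t * k / n ≠ 0 := div_ne_zero (mul_ne_zero ht hkR) hnR
        rw [sinc, if_neg this]
        have h1 : Real.pi * (t * k / n) = Real.pi * k / n * t := by ring
        have hp := Real.pi_ne_zero
        rw [h1]
        field_simp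
    have hfun : (fun t : ℝ => dKerR n σ t k) = fun t : ℝ =>
        (C / s * Complex.exp (a * Complex.I) / (2 * Complex.I * a)) *
          (1 - Complex.exp (-2 * a * Complex.I * (t : ℂ))) := by
      funext t
      have e1 : Complex.I * (Real.pi : ℂ) * (k : ℂ) * (1 - (t : ℂ)) / (n : ℂ)
          = a * Complex.I + -(a * t) * Complex.I := by rw [ha]; ring
      have e2 : -2 * a * Complex.I * (t : ℂ) = -(a * t) * Complex.I + -(a * t) * Complex.I := by ring
      have e3 : Complex.exp (a * t * Complex.I) * Complex.exp (-(a * t) * Complex.I) = 1 := by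
        rw [← Complex.exp_add]; simp
      have e4 : ((t * sinc (t * k / n) / s : ℝ) : ℂ) = Complex.sin (a * t) / a / s := by
        rw [key]; push_cast; rw [ha]
      have e5 : Complex.sin (a * t) = (Complex.exp (a * t * Complex.I)
          - Complex.exp (-(a * t) * Complex.I)) / (2 * Complex.I) := by
        rw [Complex.sin]
        have hI := Complex.I_ne_zero
        field_simp
        rw [Complex.I_sq]; ring
      rw [dKerR, ← hs, e4, e5, e1, e2, Complex.exp_add, Complex.exp_add, ← e3, ← hC]
      have hI := Complex.I_ne_zero
      simp only [div_eq_mul_inv, mul_inv]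
      ring
    rw [hfun]
    have hd : HasDerivAt (fun t : ℝ => -2 * a * Complex.I * (t : ℂ)) (-2 * a * Complex.I) w := by
      simpa using ((hasDerivAt_id w).ofReal_comp).const_mul (-2 * a * Complex.I)
    have h2 := ((hd.cexp).const_sub 1).const_mul
      (C / s * Complex.exp (a * Complex.I) / (2 * Complex.I * a))
    refine h2.congr_deriv ?_
    have f1 : -2 * (Real.pi : ℂ) * Complex.I * (k : ℂ) * (w : ℂ) / (n : ℂ)
        = -2 * a * Complex.I * w := by rw [ha]; ring
    have f2 : Complex.I * (Real.pi : ℂ) * (k : ℂ) / (n : ℂ) = a * Complex.I := by rw [ha]; ring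
    rw [f1, f2]
    have hI := Complex.I_ne_zero
    have h3 : (2 * Complex.I * a) ≠ 0 := by simp [ha0]
    have h4 : (2 * Complex.I * a) * (2 * Complex.I * a)⁻¹ = 1 := mul_inv_cancel₀ h3
    simp only [div_eq_mul_inv]
    linear_combination (C * (s : ℂ)⁻¹ * Complex.exp (a * Complex.I) *
      Complex.exp (-2 * a * Complex.I * w)) * h4
end

section
/- Let n be a positive integer, σ > 0, and w, l real. Regard each entry of the Gaudi mask m̃_{(w,l)}^σ[j] = (1/n)·Σ_{k=0}^{n−1} e^{2πi·jk/n} · e^{−2πi·kl/n} · d_w^σ[k] as a function of the real variable w. Then for every j ∈ {0,...,n−1} and every w ∈ ℝ, the derivative of m̃_{(w,l)}^σ[j] with respect to w equals (1/n)·Σ_{k=0}^{n−1} e^{2πi·jk/n} · e^{−2πi·k(w+l)/n} · e^{iπk/n} · e^{−k²/(2σ²)} / sinc(k/n). -/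
open BigOperators

/-- The Gaudi mask with real-valued width `w` and location `l`:
`m̃_{(w,l)}^σ[j] = (1/n)·∑_{k=0}^{n−1} e^{2πi·jk/n} e^{−2πi·kl/n} d_w^σ[k]`. -/
noncomputable def gaudiMaskR (n : ℕ) (σ w l : ℝ) (j : Fin n) : ℂ :=
  (1 / n : ℂ) * ∑ k ∈ Finset.range n,
    Complex.exp (2 * (Real.pi : ℂ) * Complex.I * (j : ℂ) * (k : ℂ) / (n : ℂ))
      * Complex.exp (-2 * (Real.pi : ℂ) * Complex.I * (k : ℂ) * (l : ℂ) / (n : ℂ))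
      * dKerR n σ w k

/-- `t · sinc (t k / n)` is a sine quotient when `k ≠ 0`. -/
lemma mul_sinc_eq (n k : ℕ) (hn : 0 < n) (hk : k ≠ 0) (t : ℝ) :
    t * sinc (t * k / n) = Real.sin (Real.pi * k / n * t) / (Real.pi * k / n) := by
  have hn' : (n : ℝ) ≠ 0 := by positivity
  have hk' : (k : ℝ) ≠ 0 := by exact_mod_cast hk
  have hp := Real.pi_ne_zero
  by_cases ht : t = 0
  · subst ht; simp
  · have h : t * k / n ≠ 0 := by positivity
    rw [sinc, if_neg h]
    have e : Real.pi * (t * k / n) = Real.pi * k / n * t := by ring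
    rw [e]
    field_simp

/-- Derivative in `t` of the width-dependent factor. -/
lemma hasDerivAt_core (n k : ℕ) (hn : 0 < n) (w : ℝ) :
    HasDerivAt (fun t : ℝ => ((t * sinc (t * k / n) : ℝ) : ℂ)
        * Complex.exp (Complex.I * (Real.pi : ℂ) * (k : ℂ) * (1 - (t : ℂ)) / (n : ℂ)))
      (Complex.exp (-2 * (Real.pi : ℂ) * Complex.I * (k : ℂ) * (w : ℂ) / (n : ℂ))
        * Complex.exp (Complex.I * (Real.pi : ℂ) * (k : ℂ) / (n : ℂ))) w := by
  by_cases hk : k = 0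
  · subst hk
    simpa [sinc] using (hasDerivAt_id w).ofReal_comp
  have hnC : (n : ℂ) ≠ 0 := by exact_mod_cast hn.ne'
  have hkC : (k : ℂ) ≠ 0 := by exact_mod_cast hk
  have hpC : (Real.pi : ℂ) ≠ 0 := by exact_mod_cast Real.pi_ne_zero
  obtain ⟨a, ha⟩ : ∃ a : ℂ, a = (Real.pi : ℂ) * k / n := ⟨_, rfl⟩
  have ha0 : a ≠ 0 := by rw [ha]; exact div_ne_zero (mul_ne_zero hpC hkC) hnC
  have hI := Complex.I_ne_zero
  have key : (fun t : ℝ => ((t * sinc (t * k / n) : ℝ) : ℂ)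
        * Complex.exp (Complex.I * (Real.pi : ℂ) * (k : ℂ) * (1 - (t : ℂ)) / (n : ℂ)))
      = fun t : ℝ => (Complex.exp (a * Complex.I) / (-2 * a * Complex.I))
          * (Complex.exp (-2 * a * Complex.I * (t : ℂ)) - 1) := by
    funext t
    rw [mul_sinc_eq n k hn hk t]
    push_cast
    rw [← ha, Complex.sin]
    have e1 : Complex.I * (Real.pi : ℂ) * (k : ℂ) * (1 - (t : ℂ)) / (n : ℂ)
        = a * Complex.I + -(a * t) * Complex.I := by rw [ha]; ring
    have e2 : -2 * a * Complex.I * (t : ℂ)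
        = -(a * t) * Complex.I + -(a * t) * Complex.I := by ring
    have e3 : Complex.exp (a * t * Complex.I) * Complex.exp (-(a * t) * Complex.I) = 1 := by
      rw [← Complex.exp_add]; simp
    rw [e1, e2, Complex.exp_add, Complex.exp_add]
    generalize Complex.exp (a * t * Complex.I) = x at *
    generalize Complex.exp (-(a * t) * Complex.I) = y at *
    field_simp
    linear_combination (y ^ 2 - 1) * Complex.I_sq - Complex.I ^ 2 * e3
  rw [key]
  have h1 : HasDerivAt (fun t : ℝ => -2 * a * Complex.I * (t : ℂ)) (-2 * a * Complex.I) w := by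
    simpa using ((hasDerivAt_id w).ofReal_comp).const_mul (-2 * a * Complex.I)
  have h2 := ((h1.cexp).sub_const 1).const_mul (Complex.exp (a * Complex.I) / (-2 * a * Complex.I))
  refine h2.congr_deriv ?_
  have e1 : -2 * (Real.pi : ℂ) * Complex.I * (k : ℂ) * (w : ℂ) / (n : ℂ)
      = -2 * a * Complex.I * w := by rw [ha]; ring
  have e2 : Complex.I * (Real.pi : ℂ) * (k : ℂ) / (n : ℂ) = a * Complex.I := by rw [ha]; ring
  rw [e1, e2]
  field_simp

/-- Derivative of each Gaudi-mask entry with respect to the (real) width: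
`∂/∂w m̃_{(w,l)}^σ[j]
  = (1/n)·∑_k e^{2πi·jk/n} e^{−2πi·k(w+l)/n} e^{iπk/n} e^{−k²/(2σ²)} / sinc(k/n)`. -/
theorem hasDerivAt_gaudiMaskR_width (n : ℕ) (hn : 0 < n) (σ : ℝ) (hσ : 0 < σ)
    (w l : ℝ) (j : Fin n) :
    HasDerivAt (fun t : ℝ => gaudiMaskR n σ t l j)
      ((1 / n : ℂ) * ∑ k ∈ Finset.range n,
        Complex.exp (2 * (Real.pi : ℂ) * Complex.I * (j : ℂ) * (k : ℂ) / (n : ℂ))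
          * Complex.exp (-2 * (Real.pi : ℂ) * Complex.I * (k : ℂ) * ((w : ℂ) + (l : ℂ)) / (n : ℂ))
          * Complex.exp (Complex.I * (Real.pi : ℂ) * (k : ℂ) / (n : ℂ))
          * ((Real.exp (-(k : ℝ) ^ 2 / (2 * σ ^ 2)) : ℝ) : ℂ)
          / ((sinc ((k : ℝ) / n) : ℝ) : ℂ)) w := by
  unfold gaudiMaskR
  refine HasDerivAt.const_mul _ (HasDerivAt.fun_sum fun k _ => ?_)
  have h := (hasDerivAt_core n k hn w).const_mul
    (Complex.exp (2 * (Real.pi : ℂ) * Complex.I * (j : ℂ) * (k : ℂ) / (n : ℂ))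
      * Complex.exp (-2 * (Real.pi : ℂ) * Complex.I * (k : ℂ) * (l : ℂ) / (n : ℂ))
      * ((Real.exp (-(k : ℝ) ^ 2 / (2 * σ ^ 2)) : ℝ) : ℂ)
      / ((sinc ((k : ℝ) / n) : ℝ) : ℂ))
  have hf : (fun t : ℝ =>
      Complex.exp (2 * (Real.pi : ℂ) * Complex.I * (j : ℂ) * (k : ℂ) / (n : ℂ))
      * Complex.exp (-2 * (Real.pi : ℂ) * Complex.I * (k : ℂ) * (l : ℂ) / (n : ℂ))
      * dKerR n σ t k) =
    fun t : ℝ => (Complex.exp (2 * (Real.pi : ℂ) * Complex.I * (j : ℂ) * (k : ℂ) / (n : ℂ))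
      * Complex.exp (-2 * (Real.pi : ℂ) * Complex.I * (k : ℂ) * (l : ℂ) / (n : ℂ))
      * ((Real.exp (-(k : ℝ) ^ 2 / (2 * σ ^ 2)) : ℝ) : ℂ)
      / ((sinc ((k : ℝ) / n) : ℝ) : ℂ)) * (((t * sinc (t * k / n) : ℝ) : ℂ)
        * Complex.exp (Complex.I * (Real.pi : ℂ) * (k : ℂ) * (1 - (t : ℂ)) / (n : ℂ))) := by
    funext t
    unfold dKerR
    push_cast
    ring
  rw [hf]
  refine h.congr_deriv ?_
  · have e : -2 * (Real.pi : ℂ) * Complex.I * (k : ℂ) * ((w : ℂ) + (l : ℂ)) / (n : ℂ)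
        = -2 * (Real.pi : ℂ) * Complex.I * (k : ℂ) * (w : ℂ) / (n : ℂ)
          + -2 * (Real.pi : ℂ) * Complex.I * (k : ℂ) * (l : ℂ) / (n : ℂ) := by ring
    rw [e, Complex.exp_add]
    ring
end

section
/- Let n be a positive integer, σ > 0, and w, l ∈ [0,n] real. Let g ∈ ℂ^n be the entrywise derivative of the Gaudi mask with respect to the width, i.e. g[j] = (1/n)·Σ_{k=0}^{n−1} e^{2πi·jk/n} · e^{−2πi·k(w+l)/n} · e^{iπk/n} · e^{−k²/(2σ²)} / sinc(k/n), which is the derivative at w of the function w ↦ m̃_{(w,l)}^σ[j] for each j. Then the Euclidean norm of g satisfies ‖g‖₂² = (1/n)·Σ_{k=0}^{n−1} (e^{−k²/(2σ²)}/sinc(k/n))², and in particular ‖g‖₂ ≤ 1/sinc((n−1)/n) < ∞. -/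
open BigOperators

theorem aux_parseval (n : ℕ) (hn : 0 < n) (c : ℕ → ℂ) :
    ∑ j ∈ Finset.range n, ‖∑ k ∈ Finset.range n,
      Complex.exp (2 * (Real.pi : ℂ) * Complex.I / (n : ℂ)) ^ (j * k) * c k‖ ^ 2
      = n * ∑ k ∈ Finset.range n, ‖c k‖ ^ 2 := by
  have hprim := Complex.isPrimitiveRoot_exp n hn.ne'
  set z := Complex.exp (2 * (Real.pi : ℂ) * Complex.I / (n : ℂ)) with hz
  have hz0 : z ≠ 0 := Complex.exp_ne_zero _
  have hconj : (starRingEnd ℂ) z = z⁻¹ := by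
    have h1 : ‖z‖ = 1 := hprim.norm'_eq_one hn.ne'
    exact (Complex.inv_eq_conj h1).symm
  have orth : ∀ k ∈ Finset.range n, ∀ m ∈ Finset.range n,
      ∑ j ∈ Finset.range n, (z ^ k * z⁻¹ ^ m) ^ j = if k = m then (n : ℂ) else 0 := by
    intro k hk m hm
    split_ifs with h
    · subst h
      have : z ^ k * z⁻¹ ^ k = 1 := by rw [← mul_pow, mul_inv_cancel₀ hz0, one_pow]
      simp only [this, one_pow]
      simp
    · have hq : z ^ k * z⁻¹ ^ m ≠ 1 := by
        intro hq
        apply h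
        apply hprim.pow_inj (Finset.mem_range.1 hk) (Finset.mem_range.1 hm)
        rw [inv_pow] at hq
        exact (mul_inv_eq_one₀ (pow_ne_zero _ hz0)).1 hq
      rw [geom_sum_eq hq]
      have : (z ^ k * z⁻¹ ^ m) ^ n = 1 := by
        rw [mul_pow, ← pow_mul, ← pow_mul, mul_comm k, mul_comm m, pow_mul, pow_mul, inv_pow,
          hprim.pow_eq_one]
        simp
      rw [this, sub_self, zero_div]
  apply Complex.ofReal_injective
  push_cast
  simp_rw [← Complex.mul_conj', map_sum, map_mul, map_pow, hconj, Finset.sum_mul_sum]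
  rw [Finset.sum_comm, Finset.mul_sum]
  refine Finset.sum_congr rfl fun k hk => ?_
  rw [Finset.sum_comm]
  have : ∀ m ∈ Finset.range n, ∑ j ∈ Finset.range n,
      z ^ (j * k) * c k * (z⁻¹ ^ (j * m) * (starRingEnd ℂ) (c m))
      = (if k = m then (n : ℂ) else 0) * (c k * (starRingEnd ℂ) (c m)) := by
    intro m hm
    rw [← orth k hk m hm, Finset.sum_mul]
    refine Finset.sum_congr rfl fun j _ => ?_
    rw [mul_pow, ← pow_mul, ← pow_mul, mul_comm k, mul_comm m]
    ring
  rw [Finset.sum_congr rfl this]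
  simp [Finset.mem_range.1 hk]

theorem aux_sinc_pos {x : ℝ} (h0 : 0 ≤ x) (h1 : x < 1) : 0 < sinc x := by
  unfold sinc
  split_ifs with h
  · exact one_pos
  · have hx : 0 < x := lt_of_le_of_ne h0 (Ne.symm h)
    have hp := Real.pi_pos
    exact div_pos (Real.sin_pos_of_pos_of_lt_pi (by positivity) (by nlinarith)) (by positivity)

theorem aux_sinc_anti {x y : ℝ} (h0 : 0 ≤ x) (hxy : x ≤ y) (h1 : y < 1) : sinc y ≤ sinc x := by
  have hp := Real.pi_pos
  rcases h0.eq_or_lt with h | hx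
  · subst h
    rcases hxy.eq_or_lt with h | hy
    · rw [h]
    · unfold sinc
      rw [if_neg hy.ne', if_pos rfl, div_le_one (by positivity)]
      exact Real.sin_le (by positivity)
  · have hy : 0 < y := hx.trans_le hxy
    have hc := strictConcaveOn_sin_Icc.concaveOn.2
      (show (0 : ℝ) ∈ Set.Icc 0 Real.pi from ⟨le_refl _, hp.le⟩)
      (show Real.pi * y ∈ Set.Icc 0 Real.pi from ⟨by positivity, by nlinarith⟩)
      (show 0 ≤ 1 - x / y by rw [sub_nonneg, div_le_one hy]; exact hxy)
      (show 0 ≤ x / y by positivity) (by ring)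
    have e : x / y * (Real.pi * y) = Real.pi * x := by field_simp
    simp only [smul_eq_mul, mul_zero, zero_add, Real.sin_zero, e] at hc
    unfold sinc
    rw [if_neg hy.ne', if_neg hx.ne', le_div_iff₀ (by positivity)]
    calc _ = x / y * Real.sin (Real.pi * y) := by field_simp
      _ ≤ _ := hc

/-- Norm of the width-derivative of the Gaudi mask:
`‖g‖₂² = (1/n)·∑_k (e^{−k²/(2σ²)}/sinc(k/n))²` and `‖g‖₂ ≤ 1/sinc((n−1)/n)`. -/
theorem norm_gaudiMask_width_deriv (n : ℕ) (hn : 0 < n) (σ : ℝ) (hσ : 0 < σ)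
    (w l : ℝ) (hw : w ∈ Set.Icc (0 : ℝ) n) (hl : l ∈ Set.Icc (0 : ℝ) n)
    (g : EuclideanSpace ℂ (Fin n))
    (hg : ∀ j : Fin n, g j = (1 / n : ℂ) * ∑ k ∈ Finset.range n,
      Complex.exp (2 * (Real.pi : ℂ) * Complex.I * (j : ℂ) * (k : ℂ) / (n : ℂ))
        * Complex.exp (-2 * (Real.pi : ℂ) * Complex.I * (k : ℂ) * ((w : ℂ) + (l : ℂ)) / (n : ℂ))
        * Complex.exp (Complex.I * (Real.pi : ℂ) * (k : ℂ) / (n : ℂ))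
        * ((Real.exp (-(k : ℝ) ^ 2 / (2 * σ ^ 2)) : ℝ) : ℂ)
        / ((sinc ((k : ℝ) / n) : ℝ) : ℂ)) :
    ‖g‖ ^ 2 = (1 / n : ℝ) * ∑ k ∈ Finset.range n,
        (Real.exp (-(k : ℝ) ^ 2 / (2 * σ ^ 2)) / sinc ((k : ℝ) / n)) ^ 2
      ∧ ‖g‖ ≤ 1 / sinc (((n : ℝ) - 1) / n) := by
  have hn' : (0 : ℝ) < n := by exact_mod_cast hn
  have hnC : (n : ℂ) ≠ 0 := by exact_mod_cast hn.ne'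
  have key : ‖g‖ ^ 2 = (1 / n : ℝ) * ∑ k ∈ Finset.range n,
        (Real.exp (-(k : ℝ) ^ 2 / (2 * σ ^ 2)) / sinc ((k : ℝ) / n)) ^ 2 := by
    let c : ℕ → ℂ := fun k =>
      Complex.exp (-2 * (Real.pi : ℂ) * Complex.I * (k : ℂ) * ((w : ℂ) + (l : ℂ)) / (n : ℂ))
        * Complex.exp (Complex.I * (Real.pi : ℂ) * (k : ℂ) / (n : ℂ))
        * ((Real.exp (-(k : ℝ) ^ 2 / (2 * σ ^ 2)) : ℝ) : ℂ)
        / ((sinc ((k : ℝ) / n) : ℝ) : ℂ)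
    have hc : ∀ k, ‖c k‖ ^ 2 =
        (Real.exp (-(k : ℝ) ^ 2 / (2 * σ ^ 2)) / sinc ((k : ℝ) / n)) ^ 2 := by
      intro k
      have e1 : -2 * (Real.pi : ℂ) * Complex.I * (k : ℂ) * ((w : ℂ) + (l : ℂ)) / (n : ℂ)
          = ((-2 * Real.pi * k * (w + l) / n : ℝ) : ℂ) * Complex.I := by
        push_cast; ring
      have e2 : Complex.I * (Real.pi : ℂ) * (k : ℂ) / (n : ℂ)
          = ((Real.pi * k / n : ℝ) : ℂ) * Complex.I := by
        push_cast; ring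
      simp only [c]
      rw [e1, e2, norm_div, norm_mul, norm_mul, Complex.norm_exp_ofReal_mul_I,
        Complex.norm_exp_ofReal_mul_I, Complex.norm_real, Complex.norm_real, one_mul, one_mul,
        ← norm_div, Real.norm_eq_abs, sq_abs]
    have hP := aux_parseval n hn c
    have hgj : ∀ j : Fin n, ‖g j‖ ^ 2 = (1 / n : ℝ) ^ 2 * ‖∑ k ∈ Finset.range n,
      Complex.exp (2 * (Real.pi : ℂ) * Complex.I / (n : ℂ)) ^ ((j : ℕ) * k) * c k‖ ^ 2 := by
      intro j
      rw [hg j, norm_mul, mul_pow]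
      congr 1
      · simp
      · congr 2
        refine Finset.sum_congr rfl fun k _ => ?_
        rw [← Complex.exp_nat_mul]
        have e : ((((j : ℕ) * k : ℕ) : ℂ)) * (2 * (Real.pi : ℂ) * Complex.I / (n : ℂ))
          = 2 * (Real.pi : ℂ) * Complex.I * (j : ℂ) * (k : ℂ) / (n : ℂ) := by
          push_cast; ring
        rw [e]
        simp only [c]
        ring
    rw [EuclideanSpace.norm_sq_eq, Finset.sum_congr rfl fun j _ => hgj j, ← Finset.mul_sum,
      Fin.sum_univ_eq_sum_range (fun j => ‖∑ k ∈ Finset.range n,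
      Complex.exp (2 * (Real.pi : ℂ) * Complex.I / (n : ℂ)) ^ (j * k) * c k‖ ^ 2), hP,
      Finset.sum_congr rfl fun k _ => hc k]
    field_simp
  refine ⟨key, ?_⟩
  have h1 : (1 : ℝ) ≤ n := by exact_mod_cast hn
  have hlt : ((n : ℝ) - 1) / n < 1 := by rw [div_lt_one hn']; linarith
  have hs : 0 < sinc (((n : ℝ) - 1) / n) :=
    aux_sinc_pos (div_nonneg (by linarith) hn'.le) hlt
  refine le_of_sq_le_sq ?_ (by positivity)
  rw [key]
  have hb : ∀ k ∈ Finset.range n,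
      (Real.exp (-(k : ℝ) ^ 2 / (2 * σ ^ 2)) / sinc ((k : ℝ) / n)) ^ 2
        ≤ (1 / sinc (((n : ℝ) - 1) / n)) ^ 2 := by
    intro k hk
    have hk1 : (k : ℝ) ≤ n - 1 := by
      have : k + 1 ≤ n := Finset.mem_range.1 hk
      have : (k : ℝ) + 1 ≤ n := by exact_mod_cast this
      linarith
    have hle : (k : ℝ) / n ≤ ((n : ℝ) - 1) / n := by gcongr
    have hk0 : 0 ≤ (k : ℝ) / n := by positivity
    have hsk := aux_sinc_pos hk0 (hle.trans_lt hlt)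
    have ha := aux_sinc_anti hk0 hle hlt
    have he : Real.exp (-(k : ℝ) ^ 2 / (2 * σ ^ 2)) ≤ 1 := by
      rw [Real.exp_le_one_iff, neg_div]
      exact neg_nonpos.2 (by positivity)
    gcongr
  calc _ ≤ (1 / n : ℝ) * ∑ k ∈ Finset.range n, (1 / sinc (((n : ℝ) - 1) / n)) ^ 2 := 
        mul_le_mul_of_nonneg_left (Finset.sum_le_sum hb) (by positivity)
    _ = _ := by
        rw [Finset.sum_const, Finset.card_range, nsmul_eq_mul]
        field_simp
end

section
/- Let n ≥ 2 be an integer, σ > 0, and w, l ∈ [0,n] real. Let h ∈ ℂ^n be the entrywise derivative of the Gaudi mask with respect to the location, i.e. h[j] = (1/n)·Σ_{k=0}^{n−1} e^{2πi·jk/n} · (−2πi·k/n) · e^{−2πi·kl/n} · d_w^σ[k], which is the derivative at l of the function l ↦ m̃_{(w,l)}^σ[j] for each j. Then the Euclidean norm of h satisfies ‖h‖₂ ≤ 2π·((n−1)/n)/sinc((n−1)/n) < ∞. -/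
open BigOperators

theorem parseval_aux (n : ℕ) (hn : 2 ≤ n) (c : ℕ → ℂ) :
    ∑ j : Fin n, ‖∑ k ∈ Finset.range n,
      Complex.exp (2 * (Real.pi : ℂ) * Complex.I * (j : ℂ) * (k : ℂ) / (n : ℂ)) * c k‖ ^ 2
      = n * ∑ k ∈ Finset.range n, ‖c k‖ ^ 2 := by
  have hn0 : n ≠ 0 := by omega
  have hz := Complex.isPrimitiveRoot_exp n hn0
  set z := Complex.exp (2 * Real.pi * Complex.I / n) with hzd
  have hz0 : z ≠ 0 := Complex.exp_ne_zero _
  have he : ∀ j k : ℕ,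
      Complex.exp (2 * (Real.pi : ℂ) * Complex.I * (j : ℂ) * (k : ℂ) / (n : ℂ)) = (z ^ k) ^ j := by
    intro j k
    rw [hzd, ← pow_mul, ← Complex.exp_nat_mul]
    congr 1
    push_cast
    ring
  have hconj : (starRingEnd ℂ) z = z⁻¹ := by
    rw [hzd, ← Complex.exp_conj, ← Complex.exp_neg]
    congr 1
    simp [neg_div, Complex.conj_ofNat]
  have horth : ∀ k ∈ Finset.range n, ∀ m ∈ Finset.range n,
      ∑ j ∈ Finset.range n, (z ^ k * (z⁻¹) ^ m) ^ j = if k = m then (n : ℂ) else 0 := by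
    intro k hk m hm
    split_ifs with hkm
    · subst hkm
      have : z ^ k * z⁻¹ ^ k = 1 := by rw [← mul_pow, mul_inv_cancel₀ hz0, one_pow]
      simp only [this, one_pow]
      simp
    · have hx : z ^ k * z⁻¹ ^ m ≠ 1 := by
        intro hx
        apply hkm
        apply hz.pow_inj (Finset.mem_range.1 hk) (Finset.mem_range.1 hm)
        rw [inv_pow] at hx
        exact (mul_inv_eq_one₀ (pow_ne_zero _ hz0)).1 hx
      have hxn : (z ^ k * z⁻¹ ^ m) ^ n = 1 := by
        rw [mul_pow, ← pow_mul, ← pow_mul, mul_comm k, mul_comm m, pow_mul, pow_mul, inv_pow,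
          hz.pow_eq_one]
        simp
      rw [geom_sum_eq hx, hxn]
      simp
  have key : ((∑ j ∈ Finset.range n, ‖∑ k ∈ Finset.range n, (z ^ k) ^ j * c k‖ ^ 2 : ℝ) : ℂ)
      = ((n * ∑ k ∈ Finset.range n, ‖c k‖ ^ 2 : ℝ) : ℂ) := by
    push_cast
    simp_rw [← Complex.mul_conj', map_sum, map_mul, map_pow, hconj, Finset.sum_mul_sum]
    rw [Finset.sum_comm, Finset.mul_sum]
    refine Finset.sum_congr rfl fun k hk => ?_
    rw [Finset.sum_comm]
    have : ∀ m ∈ Finset.range n, ∑ j ∈ Finset.range n,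
        (z ^ k) ^ j * c k * ((z⁻¹ ^ m) ^ j * (starRingEnd ℂ) (c m))
        = if k = m then (n : ℂ) * (c k * (starRingEnd ℂ) (c k)) else 0 := by
      intro m hm
      have h1 := horth k hk m hm
      have h2 : ∑ j ∈ Finset.range n,
        (z ^ k) ^ j * c k * ((z⁻¹ ^ m) ^ j * (starRingEnd ℂ) (c m))
        = (∑ j ∈ Finset.range n, (z ^ k * (z⁻¹) ^ m) ^ j) * (c k * (starRingEnd ℂ) (c m)) := by
        rw [Finset.sum_mul]
        refine Finset.sum_congr rfl fun j _ => ?_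
        rw [mul_pow (z ^ k)]
        ring
      rw [h2, h1]
      split_ifs with hkm
      · rw [hkm]
      · simp
    rw [Finset.sum_congr rfl this, Finset.sum_ite_eq, if_pos hk]
  have key' := Complex.ofReal_injective key
  rw [← key', ← Fin.sum_univ_eq_sum_range
    (fun j => ‖∑ k ∈ Finset.range n, (z ^ k) ^ j * c k‖ ^ 2)]
  simp_rw [he]

theorem sinc_pos_aux (x : ℝ) (hx : 0 < x) (h1 : x < 1) : 0 < sinc x := by
  have hp := Real.pi_pos
  rw [sinc, if_neg hx.ne']
  exact div_pos (Real.sin_pos_of_pos_of_lt_pi (by positivity) (by nlinarith)) (by positivity)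

theorem sinc_anti_aux (x y : ℝ) (hx : 0 < x) (hxy : x ≤ y) (h1 : y < 1) : sinc y ≤ sinc x := by
  have hp := Real.pi_pos
  have hy : 0 < y := by linarith
  rw [sinc, sinc, if_neg hx.ne', if_neg hy.ne']
  have ha : 0 ≤ 1 - x / y := by rw [sub_nonneg, div_le_one hy]; exact hxy
  have hb : 0 ≤ x / y := by positivity
  have hm0 : (0 : ℝ) ∈ Set.Icc 0 Real.pi := ⟨le_rfl, hp.le⟩
  have hmy : Real.pi * y ∈ Set.Icc 0 Real.pi := ⟨by positivity, by nlinarith⟩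
  have hc := strictConcaveOn_sin_Icc.concaveOn.2 hm0 hmy ha hb (by ring)
  simp only [smul_eq_mul, Real.sin_zero, mul_zero, zero_add] at hc
  have e : x / y * (Real.pi * y) = Real.pi * x := by field_simp
  rw [e] at hc
  rw [div_le_div_iff₀ (by positivity) (by positivity)]
  have : Real.sin (Real.pi * y) * (Real.pi * x)
      = (x / y * Real.sin (Real.pi * y)) * (Real.pi * y) := by field_simp
  rw [this]
  exact mul_le_mul_of_nonneg_right hc (by positivity)

theorem coeff_aux (n : ℕ) (hn : 2 ≤ n) (σ w l : ℝ) (k : ℕ) (hk : k < n) :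
    ‖(-2 * (Real.pi : ℂ) * Complex.I * (k : ℂ) / (n : ℂ))
        * Complex.exp (-2 * (Real.pi : ℂ) * Complex.I * (k : ℂ) * (l : ℂ) / (n : ℂ))
        * dKerR n σ w k‖ ≤ 2 / sinc (((n : ℝ) - 1) / n) := by
  have hp := Real.pi_pos
  have hn' : (2 : ℝ) ≤ n := by exact_mod_cast hn
  have hn0 : (0 : ℝ) < n := by linarith
  have hs : 0 < sinc (((n : ℝ) - 1) / n) :=
    sinc_pos_aux _ (div_pos (by linarith) hn0) (by rw [div_lt_one hn0]; linarith)
  rcases Nat.eq_zero_or_pos k with rfl | hk0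
  · simp; positivity
  have hk1 : (1 : ℝ) ≤ k := by exact_mod_cast hk0
  have hkn : (k : ℝ) ≤ n - 1 := by
    have : ((k + 1 : ℕ) : ℝ) ≤ n := by exact_mod_cast hk
    push_cast at this; linarith
  have hsk : sinc (((n : ℝ) - 1) / n) ≤ sinc ((k : ℝ) / n) :=
    sinc_anti_aux _ _ (by positivity) (by gcongr) (by rw [div_lt_one hn0]; linarith)
  have hskp : 0 < sinc ((k : ℝ) / n) := hs.trans_le hsk
  have e1 : ‖Complex.exp (-2 * (Real.pi : ℂ) * Complex.I * (k : ℂ) * (l : ℂ) / (n : ℂ))‖ = 1 := by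
    rw [show -2 * (Real.pi : ℂ) * Complex.I * (k : ℂ) * (l : ℂ) / (n : ℂ)
      = ((-2 * Real.pi * k * l / n : ℝ) : ℂ) * Complex.I by push_cast; ring]
    exact Complex.norm_exp_ofReal_mul_I _
  have e2 : ‖Complex.exp (Complex.I * (Real.pi : ℂ) * (k : ℂ) * (1 - (w : ℂ)) / (n : ℂ))‖ = 1 := by
    rw [show Complex.I * (Real.pi : ℂ) * (k : ℂ) * (1 - (w : ℂ)) / (n : ℂ)
      = ((Real.pi * k * (1 - w) / n : ℝ) : ℂ) * Complex.I by push_cast; ring]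
    exact Complex.norm_exp_ofReal_mul_I _
  have e3 : ‖(-2 * (Real.pi : ℂ) * Complex.I * (k : ℂ) / (n : ℂ))‖ = 2 * Real.pi * k / n := by
    simp [abs_of_pos hp]
  have hexp : Real.exp (-(k : ℝ) ^ 2 / (2 * σ ^ 2)) ≤ 1 := by
    rw [Real.exp_le_one_iff, neg_div, neg_nonpos]; positivity
  have hw : 2 * Real.pi * k / n * |w * sinc (w * k / n)| ≤ 2 := by
    by_cases hw0 : w = 0
    · simp [hw0]
    have hne : w * k / n ≠ 0 := by positivity
    rw [sinc, if_neg hne]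
    have e : w * (Real.sin (Real.pi * (w * k / n)) / (Real.pi * (w * k / n)))
        = Real.sin (Real.pi * (w * k / n)) * (n / (Real.pi * k)) := by field_simp
    rw [e, abs_mul, abs_of_pos (show 0 < n / (Real.pi * k) by positivity)]
    have e' : 2 * Real.pi * k / n * (|Real.sin (Real.pi * (w * k / n))| * (n / (Real.pi * k)))
        = 2 * |Real.sin (Real.pi * (w * k / n))| := by field_simp
    rw [e']
    linarith [Real.abs_sin_le_one (Real.pi * (w * k / n))]
  rw [dKerR, norm_mul, norm_mul, norm_mul, norm_mul, e1, e2, e3, Complex.norm_real,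
    Complex.norm_real, Real.norm_eq_abs, Real.norm_eq_abs, Real.abs_exp, abs_div,
    abs_of_pos hskp, mul_one, mul_one]
  calc _ = Real.exp (-(k : ℝ) ^ 2 / (2 * σ ^ 2)) *
        ((2 * Real.pi * k / n * |w * sinc (w * k / n)|) / sinc ((k : ℝ) / n)) := by ring
    _ ≤ 1 * (2 / sinc (((n : ℝ) - 1) / n)) := by gcongr
    _ = _ := one_mul _

/-- Bound on the norm of the location-derivative of the Gaudi mask:
`‖h‖₂ ≤ 2π·((n−1)/n)/sinc((n−1)/n)`. -/
theorem norm_gaudiMask_location_deriv_le (n : ℕ) (hn : 2 ≤ n) (σ : ℝ) (hσ : 0 < σ)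
    (w l : ℝ) (hw : w ∈ Set.Icc (0 : ℝ) n) (hl : l ∈ Set.Icc (0 : ℝ) n)
    (h : EuclideanSpace ℂ (Fin n))
    (hh : ∀ j : Fin n, h j = (1 / n : ℂ) * ∑ k ∈ Finset.range n,
      Complex.exp (2 * (Real.pi : ℂ) * Complex.I * (j : ℂ) * (k : ℂ) / (n : ℂ))
        * (-2 * (Real.pi : ℂ) * Complex.I * (k : ℂ) / (n : ℂ))
        * Complex.exp (-2 * (Real.pi : ℂ) * Complex.I * (k : ℂ) * (l : ℂ) / (n : ℂ))
        * dKerR n σ w k) :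
    ‖h‖ ≤ 2 * Real.pi * (((n : ℝ) - 1) / n) / sinc (((n : ℝ) - 1) / n) := by
  have hp := Real.pi_gt_three
  have hn' : (2 : ℝ) ≤ n := by exact_mod_cast hn
  have hn0 : (0 : ℝ) < n := by linarith
  have hs : 0 < sinc (((n : ℝ) - 1) / n) :=
    sinc_pos_aux _ (div_pos (by linarith) hn0) (by rw [div_lt_one hn0]; linarith)
  have hb : ‖h‖ ≤ 2 / sinc (((n : ℝ) - 1) / n) := by
    refine abs_le_of_sq_le_sq' ?_ (by positivity) |>.2
    rw [EuclideanSpace.norm_sq_eq]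
    have hj : ∀ j : Fin n, h j = (1 / n : ℂ) * ∑ k ∈ Finset.range n,
        Complex.exp (2 * (Real.pi : ℂ) * Complex.I * (j : ℂ) * (k : ℂ) / (n : ℂ))
          * ((-2 * (Real.pi : ℂ) * Complex.I * (k : ℂ) / (n : ℂ))
          * Complex.exp (-2 * (Real.pi : ℂ) * Complex.I * (k : ℂ) * (l : ℂ) / (n : ℂ))
          * dKerR n σ w k) := by
      intro j
      rw [hh]
      congr 1
      exact Finset.sum_congr rfl fun k _ => by ring
    have hj2 : ∀ j : Fin n, ‖h j‖ ^ 2 = ‖(1 / n : ℂ)‖ ^ 2 * ‖∑ k ∈ Finset.range n,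
        Complex.exp (2 * (Real.pi : ℂ) * Complex.I * (j : ℂ) * (k : ℂ) / (n : ℂ))
          * ((-2 * (Real.pi : ℂ) * Complex.I * (k : ℂ) / (n : ℂ))
          * Complex.exp (-2 * (Real.pi : ℂ) * Complex.I * (k : ℂ) * (l : ℂ) / (n : ℂ))
          * dKerR n σ w k)‖ ^ 2 := by
      intro j
      rw [hj, norm_mul, mul_pow]
    rw [Finset.sum_congr rfl fun j _ => hj2 j, ← Finset.mul_sum]
    rw [parseval_aux n hn (fun k => (-2 * (Real.pi : ℂ) * Complex.I * (k : ℂ) / (n : ℂ))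
        * Complex.exp (-2 * (Real.pi : ℂ) * Complex.I * (k : ℂ) * (l : ℂ) / (n : ℂ))
        * dKerR n σ w k)]
    have hsum := Finset.sum_le_card_nsmul (Finset.range n)
      (fun k : ℕ => ‖(-2 * (Real.pi : ℂ) * Complex.I * (k : ℂ) / (n : ℂ))
        * Complex.exp (-2 * (Real.pi : ℂ) * Complex.I * (k : ℂ) * (l : ℂ) / (n : ℂ))
        * dKerR n σ w k‖ ^ 2) ((2 / sinc (((n : ℝ) - 1) / n)) ^ 2)
      (fun k hk => pow_le_pow_left₀ (norm_nonneg _)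
        (coeff_aux n hn σ w l k (Finset.mem_range.1 hk)) 2)
    rw [Finset.card_range, nsmul_eq_mul] at hsum
    have en : ‖(1 / n : ℂ)‖ = 1 / n := by simp
    rw [en]
    calc _ ≤ (1 / (n : ℝ)) ^ 2 * (n * (n * (2 / sinc (((n : ℝ) - 1) / n)) ^ 2)) := by gcongr
      _ = _ := by field_simp
  refine hb.trans ?_
  have hhalf : 1 / 2 ≤ ((n : ℝ) - 1) / n := by
    rw [div_le_div_iff₀ (by norm_num) hn0]; linarith
  gcongr
  nlinarith
end
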